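/- Let k > 0 and let s ≥ 0 be a real number that is not a positive integer. Define g(r) := ( Γ(1+s)·Γ(1−s) / (4π) ) · cos(√k·r/2) · ₂F₁(1 + s, 1 − s, 2; cos²(√k·r/2)) for r ∈ (0, π/√k). Then lim_{r → 0⁺} g(r) / log(1/r) = 1/(2π). -/

import Mathlib

open Real Set Filter Topology

lemma aux_abel (a : ℕ → ℝ) (L : ℝ) (ha : Tendsto a atTop (𝓝 L)) :
    Tendsto (fun x : ℝ => (∑' m : ℕ, a m * (x ^ (m + 1) / (m + 1))) / (-Real.log (1 - x)))
      (𝓝[<] 1) (𝓝 L) := by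
  have hlog : Tendsto (fun x : ℝ => -Real.log (1 - x)) (𝓝[<] 1) atTop := by
    apply tendsto_neg_atBot_atTop.comp
    apply Real.tendsto_log_nhdsGT_zero.comp
    apply tendsto_nhdsWithin_of_tendsto_nhds_of_eventually_within
    · have : ContinuousAt (fun x : ℝ => 1 - x) 1 := by fun_prop
      have h := this.tendsto
      simp only [sub_self] at h
      exact h.mono_left nhdsWithin_le_nhds
    · filter_upwards [self_mem_nhdsWithin] with x hx
      simpa using hx
  obtain ⟨C, hC⟩ : ∃ C : ℝ, ∀ m, |a m - L| ≤ C := by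
    have h1 : Tendsto (fun m => |a m - L|) atTop (𝓝 |L - L|) := (ha.sub_const L).abs
    obtain ⟨C, hC⟩ := h1.bddAbove_range
    exact ⟨C, fun m => hC ⟨m, rfl⟩⟩
  have hC0 : 0 ≤ C := (abs_nonneg _).trans (hC 0)
  rw [Metric.tendsto_nhds]
  intro ε hε
  obtain ⟨N, hN⟩ := (Metric.tendsto_atTop.1 ha) (ε / 2) (by positivity)
  have hI : Ioo (0 : ℝ) 1 ∈ 𝓝[<] (1 : ℝ) := Ioo_mem_nhdsLT (by norm_num)
  filter_upwards [hI, hlog.eventually_gt_atTop (2 * (C * N) / ε), hlog.eventually_gt_atTop 0]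
    with x hx hbig hpos
  set l := -Real.log (1 - x) with hl
  have hw : HasSum (fun n : ℕ => x ^ (n + 1) / ((n : ℝ) + 1)) l :=
    Real.hasSum_pow_div_log_of_abs_lt_one (by rw [abs_of_pos hx.1]; exact hx.2)
  have hw0 : ∀ n : ℕ, 0 ≤ x ^ (n + 1) / ((n : ℝ) + 1) := fun n => by
    have := hx.1
    positivity
  have hw1 : ∀ n : ℕ, x ^ (n + 1) / ((n : ℝ) + 1) ≤ 1 := fun n => by
    rw [div_le_one (by positivity)]
    have : x ^ (n + 1) ≤ 1 := pow_le_one₀ hx.1.le hx.2.le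
    have : (0 : ℝ) ≤ n := n.cast_nonneg
    linarith
  have hind : HasSum (fun m : ℕ => if m ∈ Finset.range N then C else 0) (C * N) := by
    have := hasSum_sum_of_ne_finset_zero (L := SummationFilter.unconditional ℕ) (f := fun m : ℕ => if m ∈ Finset.range N then C else 0)
      (s := Finset.range N) (fun b hb => by simp only [hb, if_false])
    convert this using 1
    rw [Finset.sum_ite_mem]
    simp [mul_comm]
  have hdom := (hw.mul_left (ε / 2)).add hind
  have hle : ∀ m : ℕ, ‖(a m - L) * (x ^ (m + 1) / ((m : ℝ) + 1))‖ ≤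
      ε / 2 * (x ^ (m + 1) / ((m : ℝ) + 1)) + (if m ∈ Finset.range N then C else 0) := by
    intro m
    rw [Real.norm_eq_abs, abs_mul, abs_of_nonneg (hw0 m)]
    by_cases hm : m < N
    · simp only [Finset.mem_range, hm, if_true]
      have h1 : |a m - L| * (x ^ (m + 1) / ((m : ℝ) + 1)) ≤ C * 1 :=
        mul_le_mul (hC m) (hw1 m) (hw0 m) hC0
      have h2 : 0 ≤ ε / 2 * (x ^ (m + 1) / ((m : ℝ) + 1)) := mul_nonneg (by positivity) (hw0 m)
      linarith
    · simp only [Finset.mem_range, hm, if_false, add_zero]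
      have := hN m (not_lt.1 hm)
      rw [Real.dist_eq] at this
      exact mul_le_mul_of_nonneg_right this.le (hw0 m)
  have hbound := tsum_of_norm_bounded hdom hle
  have hsum : Summable (fun m : ℕ => (a m - L) * (x ^ (m + 1) / ((m : ℝ) + 1))) :=
    Summable.of_norm_bounded hdom.summable hle
  have heq : (∑' m : ℕ, a m * (x ^ (m + 1) / ((m : ℝ) + 1))) =
      (∑' m : ℕ, (a m - L) * (x ^ (m + 1) / ((m : ℝ) + 1))) + L * l := by
    have := (hsum.hasSum.add (hw.mul_left L)).tsum_eq
    rw [← this]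
    congr 1
    ext m
    ring
  rw [Real.dist_eq, heq, add_div, mul_div_cancel_right₀ _ hpos.ne', add_sub_cancel_right, abs_div,
    abs_of_pos hpos, div_lt_iff₀ hpos]
  rw [Real.norm_eq_abs] at hbound
  rw [div_lt_iff₀ hε] at hbig
  linarith

lemma aux_poch_prod (x : ℝ) (n : ℕ) :
    (ascPochhammer ℝ n).eval x = ∏ j ∈ Finset.range n, (x + j) := by
  induction n with
  | zero => simp
  | succ n ih => rw [ascPochhammer_succ_eval, ih, Finset.prod_range_succ]

lemma aux_poch_two (n : ℕ) : (ascPochhammer ℝ n).eval 2 = (n + 1) * (n.factorial : ℝ) := by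
  induction n with
  | zero => simp
  | succ n ih =>
    rw [ascPochhammer_succ_eval, ih, Nat.factorial_succ]
    push_cast
    ring

lemma aux_coeff (s : ℝ) (hG : Real.Gamma (1 + s) * Real.Gamma (1 - s) ≠ 0) :
    Tendsto (fun m : ℕ => ((m : ℝ) + 1) * ordinaryHypergeometricCoefficient (1 + s) (1 - s) 2 m)
      atTop (𝓝 (Real.Gamma (1 + s) * Real.Gamma (1 - s))⁻¹) := by
  rw [← tendsto_add_atTop_iff_nat 1]
  have h1 := ((Real.GammaSeq_tendsto_Gamma (1 + s)).mul (Real.GammaSeq_tendsto_Gamma (1 - s))).inv₀ hG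
  have h2 := (tendsto_natCast_div_add_atTop (1 : ℝ)).pow 2
  have h3 := h2.mul h1
  rw [one_pow, one_mul] at h3
  refine h3.congr' ?_
  filter_upwards [eventually_gt_atTop 0] with n hn
  have hn' : (0 : ℝ) < n := by exact_mod_cast hn
  have hp : (n : ℝ) ^ (1 + s) * (n : ℝ) ^ (1 - s) = (n : ℝ) ^ 2 := by
    rw [← Real.rpow_add hn', ← Real.rpow_natCast]
    norm_num
  have hf : (n.factorial : ℝ) ≠ 0 := by exact_mod_cast n.factorial_ne_zero
  simp only [ordinaryHypergeometricCoefficient, aux_poch_two, aux_poch_prod (1 + s),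
    aux_poch_prod (1 - s), Real.GammaSeq]
  set P := ∏ j ∈ Finset.range (n + 1), (1 + s + (j : ℝ))
  set Q := ∏ j ∈ Finset.range (n + 1), (1 - s + (j : ℝ))
  have : (n : ℝ) ^ (1 + s) * n.factorial / P * ((n : ℝ) ^ (1 - s) * n.factorial / Q)
      = (n : ℝ) ^ 2 * (n.factorial : ℝ) ^ 2 / (P * Q) := by
    rw [← hp]
    rw [div_mul_div_comm]
    ring
  rw [this, inv_div, Nat.factorial_succ]
  push_cast
  field_simp

lemma aux_hyp (s : ℝ) (hG : Real.Gamma (1 + s) * Real.Gamma (1 - s) ≠ 0) :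
    Tendsto (fun x : ℝ => x * ₂F₁ (1 + s) (1 - s) (2 : ℝ) x / (-Real.log (1 - x)))
      (𝓝[<] 1) (𝓝 (Real.Gamma (1 + s) * Real.Gamma (1 - s))⁻¹) := by
  refine (aux_abel _ _ (aux_coeff s hG)).congr fun x => ?_
  congr 1
  rw [ordinaryHypergeometric_eq_tsum]
  simp only [smul_eq_mul]
  rw [← tsum_mul_left]
  congr 1
  ext m
  have : (m : ℝ) + 1 ≠ 0 := by positivity
  rw [pow_succ]
  simp only [ordinaryHypergeometricCoefficient]
  field_simp

lemma aux_log (c : ℝ) (hc : 0 < c) :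
    Tendsto (fun r : ℝ => (-Real.log (1 - Real.cos (c * r) ^ 2)) / Real.log (1 / r))
      (𝓝[>] 0) (𝓝 2) := by
  have hlog := Real.tendsto_log_nhdsGT_zero
  have hq : Tendsto (fun r : ℝ => Real.sin (c * r) / r) (𝓝[>] 0) (𝓝 c) := by
    have hd : HasDerivAt (fun r : ℝ => Real.sin (c * r)) c 0 := by
      have := ((hasDerivAt_id (0 : ℝ)).const_mul c).sin
      simpa using this
    have := hd.tendsto_slope
    have h2 := this.mono_left (nhdsWithin_mono 0 (fun x (hx : 0 < x) => ne_of_gt hx))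
    refine h2.congr fun r => ?_
    simp [slope_def_field]
  have hl := (hq.log hc.ne').div_atBot hlog
  have h3 := (hl.const_add 1).const_mul 2
  simp only [add_zero, mul_one] at h3
  refine h3.congr' ?_
  filter_upwards [self_mem_nhdsWithin, hlog.eventually_lt_atBot 0, hq.eventually (lt_mem_nhds hc)]
    with r hr hr2 hr3
  have hr : (0 : ℝ) < r := hr
  have : Real.log (Real.sin (c * r) / r) = Real.log (Real.sin (c * r)) - Real.log r :=
    Real.log_div (fun h => by simp [h] at hr3) hr.ne'
  have h4 : 1 - Real.cos (c * r) ^ 2 = Real.sin (c * r) ^ 2 := by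
    rw [Real.sin_sq]
  rw [h4, Real.log_pow, this, one_div, Real.log_inv]
  have := hr2.ne
  push_cast
  field_simp
  ring

theorem green_function_log_pole (k : ℝ) (hk : 0 < k) (s : ℝ) (hs : 0 ≤ s)
    (hns : ∀ m : ℕ, 0 < m → s ≠ m)
    (g : ℝ → ℝ)
    (hg : ∀ r ∈ Ioo 0 (π / Real.sqrt k),
      g r = (Real.Gamma (1 + s) * Real.Gamma (1 - s) / (4 * π)) *
        Real.cos (Real.sqrt k * r / 2) *
        ₂F₁ (1 + s) (1 - s) (2 : ℝ) (Real.cos (Real.sqrt k * r / 2) ^ 2)) :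
    Tendsto (fun r : ℝ => g r / Real.log (1 / r)) (𝓝[>] (0 : ℝ))
      (𝓝 (1 / (2 * π))) := by
  have hG : Real.Gamma (1 + s) * Real.Gamma (1 - s) ≠ 0 := by
    refine mul_ne_zero (Real.Gamma_pos_of_pos (by linarith)).ne' (Real.Gamma_ne_zero fun m h => ?_)
    refine hns (m + 1) (Nat.succ_pos m) ?_
    push_cast
    linarith
  have hk' : 0 < Real.sqrt k := Real.sqrt_pos.2 hk
  set c := Real.sqrt k / 2 with hc
  have hc0 : 0 < c := by positivity
  have hI : Ioo (0 : ℝ) (π / Real.sqrt k) ∈ 𝓝[>] (0 : ℝ) := Ioo_mem_nhdsGT (by positivity)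
  have hcr : ∀ r, Real.sqrt k * r / 2 = c * r := fun r => by rw [hc]; ring
  have hcI : ∀ r ∈ Ioo (0 : ℝ) (π / Real.sqrt k), c * r ∈ Ioo 0 (π / 2) := by
    intro r hr
    refine ⟨mul_pos hc0 hr.1, ?_⟩
    have := (lt_div_iff₀ hk').1 hr.2
    rw [hc]
    linarith
  have hcos : Tendsto (fun r : ℝ => Real.cos (c * r)) (𝓝[>] 0) (𝓝 1) := by
    have : ContinuousAt (fun r : ℝ => Real.cos (c * r)) 0 := by fun_prop
    have h := this.tendsto
    simp only [mul_zero, Real.cos_zero] at h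
    exact h.mono_left nhdsWithin_le_nhds
  have hx : Tendsto (fun r : ℝ => Real.cos (c * r) ^ 2) (𝓝[>] 0) (𝓝[<] 1) := by
    apply tendsto_nhdsWithin_of_tendsto_nhds_of_eventually_within
    · simpa using hcos.pow 2
    · filter_upwards [hI] with r hr
      have h := hcI r hr
      have : 0 < Real.sin (c * r) := Real.sin_pos_of_pos_of_lt_pi h.1 (by linarith [h.2, Real.pi_pos])
      have h2 := Real.sin_sq_add_cos_sq (c * r)
      simp only [mem_Iio]
      nlinarith
  have hF := (aux_hyp s hG).comp hx
  have hfin := ((hcos.inv₀ one_ne_zero).const_mul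
    (Real.Gamma (1 + s) * Real.Gamma (1 - s) / (4 * π))).mul (hF.mul (aux_log c hc0))
  have hval : Real.Gamma (1 + s) * Real.Gamma (1 - s) / (4 * π) * 1⁻¹ *
      ((Real.Gamma (1 + s) * Real.Gamma (1 - s))⁻¹ * 2) = 1 / (2 * π) := by
    have := Real.pi_pos.ne'
    generalize Real.Gamma (1 + s) * Real.Gamma (1 - s) = G at hG
    field_simp
    norm_num
  rw [hval] at hfin
  refine hfin.congr' ?_
  filter_upwards [hI] with r hr
  have h := hcI r hr
  have hc1 : 0 < Real.cos (c * r) := Real.cos_pos_of_mem_Ioo ⟨by linarith [h.1, Real.pi_pos], h.2⟩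
  have hs1 : 0 < Real.sin (c * r) := Real.sin_pos_of_pos_of_lt_pi h.1 (by linarith [h.2, Real.pi_pos])
  have h2 := Real.sin_sq_add_cos_sq (c * r)
  have hlne : -Real.log (1 - Real.cos (c * r) ^ 2) ≠ 0 := by
    have : Real.log (1 - Real.cos (c * r) ^ 2) < 0 := Real.log_neg (by nlinarith) (by nlinarith)
    linarith
  rw [hg r hr, hcr]
  simp only [Function.comp]
  generalize -Real.log (1 - Real.cos (c * r) ^ 2) = l at hlne
  generalize Real.Gamma (1 + s) * Real.Gamma (1 - s) = G
  generalize Real.log (1 / r) = t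
  generalize ₂F₁ (1 + s) (1 - s) (2 : ℝ) (Real.cos (c * r) ^ 2) = F
  field_simp
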